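/- Let M be a monoid, e ∈ M an idempotent, and w₁, w₂ units of M. Suppose f = w₁·e·w₂ is an idempotent and f commutes with g = w₁·e·w₁⁻¹. Then f = g; that is, every idempotent of the double coset that commutes with the conjugate w₁ e w₁⁻¹ is equal to that conjugate. -/

import Mathlib

/-!
Both `f = w₁ e w₂` and `g = w₁ e w₁⁻¹` generate the right ideal `w₁ e M`. An idempotent is a left
identity on the right ideal it generates, so `f g = g` and `g f = f`; hence `f = g` as soon as
they commute. In a noncommutative semigroup `a ∣ b` means `b = a * c` for some `c`, so mutual
divisibility is what expresses that two elements generate the same right ideal.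
-/

section Semigroup

variable {S : Type*} [Semigroup S] {a e f : S}

lemma mul_eq_right_of_isIdempotentElem_of_dvd (he : IsIdempotentElem e) (h : e ∣ a) :
    e * a = a := by
  obtain ⟨c, rfl⟩ := h
  exact he.mul_self_mul c

lemma eq_of_isIdempotentElem_of_commute_of_dvd_of_dvd (he : IsIdempotentElem e)
    (hf : IsIdempotentElem f) (hcomm : Commute e f) (hef : e ∣ f) (hfe : f ∣ e) : e = f :=
  calc
    e = f * e := (mul_eq_right_of_isIdempotentElem_of_dvd hf hfe).symm
    _ = e * f := hcomm.eq.symm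
    _ = f := mul_eq_right_of_isIdempotentElem_of_dvd he hef

end Semigroup

section Monoid

variable {M : Type*} [Monoid M] {e u v : M}

lemma mul_dvd_of_mul_eq_one (h : u * v = 1) (a : M) : a * u ∣ a :=
  Dvd.intro v (by rw [mul_assoc, h, mul_one])

lemma isIdempotentElem_mul_mul_of_mul_eq_one (he : IsIdempotentElem e) (h : v * u = 1) :
    IsIdempotentElem (u * e * v) :=
  calc
    u * e * v * (u * e * v) = u * e * (v * u) * e * v := by simp only [mul_assoc]
    _ = u * e * v := by rw [h, mul_one, he.mul_mul_self]

theorem idempotent_in_double_coset_eq_conjugate_general {w₁ w₁' w₂ w₂' : M}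
    (he : IsIdempotentElem e) (h₁ : w₁' * w₁ = 1) (h₂ : w₂ * w₂' = 1)
    (hf : IsIdempotentElem (w₁ * e * w₂)) (hcomm : Commute (w₁ * e * w₂) (w₁ * e * w₁')) :
    w₁ * e * w₂ = w₁ * e * w₁' := by
  have hg : IsIdempotentElem (w₁ * e * w₁') := isIdempotentElem_mul_mul_of_mul_eq_one he h₁
  have hfg : w₁ * e * w₂ ∣ w₁ * e * w₁' := (mul_dvd_of_mul_eq_one h₂ _).mul_right w₁'
  have hgf : w₁ * e * w₁' ∣ w₁ * e * w₂ := (mul_dvd_of_mul_eq_one h₁ _).mul_right w₂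
  exact eq_of_isIdempotentElem_of_commute_of_dvd_of_dvd hf hg hcomm hfg hgf

end Monoid

/-- Let `M` be a monoid, `e` an idempotent and `w₁, w₂` units. If
`f = w₁·e·w₂` is an idempotent commuting with `g = w₁·e·w₁⁻¹`, then `f = g`. -/
theorem idempotent_in_double_coset_eq_conjugate {M : Type*} [Monoid M] (e : M)
    (he : e * e = e) (w₁ w₂ : Mˣ) (f g : M)
    (hf : f = (w₁ : M) * e * (w₂ : M)) (hg : g = (w₁ : M) * e * ((w₁⁻¹ : Mˣ) : M))
    (hfidem : f * f = f) (hcomm : f * g = g * f) : f = g := by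
  subst hf hg
  exact idempotent_in_double_coset_eq_conjugate_general he w₁.inv_mul w₂.mul_inv hfidem hcomm
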